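/- For all SKS formulas P and Q and every context C{ }, there exists a derivation using only the switch rule s with premise C[P,Q] and conclusion [C{P}, Q]. -/

import Mathlib

/-!
Context insertion is proved by induction on the context `C`. Derivations compose (`Deriv.trans`)
and may be carried out inside any context (`Deriv.fill`), so the derivation from `C[P,Q]` to
`[C{P},Q]` can be placed below the outermost layer of a larger context. It then remains to move
`Q` past that layer: for a disjunction this is associativity and commutativity, and for a
conjunction it is one instance of the switch rule, from `(R,[C{P},Q])` to `[(R,C{P}),Q]`.
-/

/-!
Deep-inference systems SKSg, SKS and KS for classical propositional logic
(the calculus of structures).  Formulas are built from atoms `a`, their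
negations `ā`, and the units `t` (true) and `f` (false) by disjunction
`[P,Q]` (`dis`) and conjunction `(P,Q)` (`con`), and are considered modulo
the congruence `Equiv` generated by associativity, commutativity and the
unit laws.  Rules apply inside an arbitrary one-hole context and modulo the
equivalence.
-/

namespace DI

/-- Formulas of the calculus of structures for classical logic:
units `t`, `f`; atoms `pos a`; negated atoms `neg a`; disjunction `dis`
(written `[P,Q]`); conjunction `con` (written `(P,Q)`). -/
inductive F : Type where
  | tt  : F
  | ff  : F
  | pos : ℕ → F
  | neg : ℕ → F
  | dis : F → F → F
  | con : F → F → F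
deriving DecidableEq

/-- Negation, pushed to the atoms by the De Morgan laws:
`¬t = f`, `¬f = t`, `¬[P,Q] = (¬P,¬Q)`, `¬(P,Q) = [¬P,¬Q]`, `¬¬P = P`. -/
def F.negF : F → F
  | .tt => .ff
  | .ff => .tt
  | .pos a => .neg a
  | .neg a => .pos a
  | .dis P Q => .con P.negF Q.negF
  | .con P Q => .dis P.negF Q.negF

/-- Atoms are the propositional symbols and their negations. -/
def F.isAtom : F → Prop
  | .pos _ => True
  | .neg _ => True
  | _ => False

/-- Syntactic equivalence of formulas: the smallest congruence generated by
associativity and commutativity of both connectives and the unit laws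
`[t,t]=t`, `(f,f)=f`, `[f,P]=P`, `(t,P)=P`. -/
inductive Equiv : F → F → Prop where
  | refl (P : F) : Equiv P P
  | symm {P Q : F} : Equiv P Q → Equiv Q P
  | trans {P Q R : F} : Equiv P Q → Equiv Q R → Equiv P R
  | disComm (P Q : F) : Equiv (.dis P Q) (.dis Q P)
  | conComm (P Q : F) : Equiv (.con P Q) (.con Q P)
  | disAssoc (P Q R : F) : Equiv (.dis (.dis P Q) R) (.dis P (.dis Q R))
  | conAssoc (P Q R : F) : Equiv (.con (.con P Q) R) (.con P (.con Q R))
  | ttDis : Equiv (.dis .tt .tt) .tt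
  | ffCon : Equiv (.con .ff .ff) .ff
  | ffDis (P : F) : Equiv (.dis .ff P) P
  | ttCon (P : F) : Equiv (.con .tt P) P
  | disCongr {P P' Q Q' : F} :
      Equiv P P' → Equiv Q Q' → Equiv (.dis P Q) (.dis P' Q')
  | conCongr {P P' Q Q' : F} :
      Equiv P P' → Equiv Q Q' → Equiv (.con P Q) (.con P' Q')

/-- One-hole contexts. -/
inductive Ctx : Type where
  | hole : Ctx
  | disL : Ctx → F → Ctx
  | disR : F → Ctx → Ctx
  | conL : Ctx → F → Ctx
  | conR : F → Ctx → Ctx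

/-- Plugging a formula into the hole of a context. -/
def Ctx.fill : Ctx → F → F
  | .hole, P => P
  | .disL C Q, P => .dis (C.fill P) Q
  | .disR Q C, P => .dis Q (C.fill P)
  | .conL C Q, P => .con (C.fill P) Q
  | .conR Q C, P => .con Q (C.fill P)

/-- Names of the inference rules of SKSg and SKS. -/
inductive Rule : Type where
  | iDown | iUp | wDown | wUp | cDown | cUp | s | m
  | aiDown | aiUp | awDown | awUp | acDown | acUp
deriving DecidableEq

/-- The rules, read at the root of a formula (premise on the left,
conclusion on the right). -/
inductive RootStep : Rule → F → F → Prop where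
  | iDown (P : F) : RootStep .iDown .tt (.dis P P.negF)
  | iUp (P : F) : RootStep .iUp (.con P P.negF) .ff
  | wDown (P : F) : RootStep .wDown .ff P
  | wUp (P : F) : RootStep .wUp P .tt
  | cDown (P : F) : RootStep .cDown (.dis P P) P
  | cUp (P : F) : RootStep .cUp P (.con P P)
  | s (P Q R : F) : RootStep .s (.con P (.dis Q R)) (.dis (.con P Q) R)
  | m (P Q R S : F) :
      RootStep .m (.dis (.con P Q) (.con R S)) (.con (.dis P R) (.dis Q S))
  | aiDown (A : F) (h : A.isAtom) : RootStep .aiDown .tt (.dis A A.negF)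
  | aiUp (A : F) (h : A.isAtom) : RootStep .aiUp (.con A A.negF) .ff
  | awDown (A : F) (h : A.isAtom) : RootStep .awDown .ff A
  | awUp (A : F) (h : A.isAtom) : RootStep .awUp A .tt
  | acDown (A : F) (h : A.isAtom) : RootStep .acDown (.dis A A) A
  | acUp (A : F) (h : A.isAtom) : RootStep .acUp A (.con A A)

/-- One inference step using a rule from the set `Rs`, applied inside an
arbitrary context and modulo the equivalence. -/
def Step (Rs : Set Rule) (P Q : F) : Prop :=
  ∃ r ∈ Rs, ∃ (C : Ctx) (P' Q' : F),
    RootStep r P' Q' ∧ Equiv P (C.fill P') ∧ Equiv (C.fill Q') Q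

/-- Derivations over an arbitrary step relation: a finite sequence of rule
instances from the premise to the conclusion (modulo the equivalence). -/
inductive Deriv (St : F → F → Prop) : F → F → Prop where
  | eqv {P Q : F} : Equiv P Q → Deriv St P Q
  | step {P Q R : F} : St P Q → Deriv St Q R → Deriv St P R

/-- The system SKSg: general (non-atomic) rules plus switch. -/
def SKSg : Set Rule := {.iDown, .iUp, .wDown, .wUp, .cDown, .cUp, .s}

/-- The system SKS: atomic rules plus switch and medial. -/
def SKS : Set Rule := {.aiDown, .aiUp, .awDown, .awUp, .acDown, .acUp, .s, .m}

/-- The system KS: the down fragment of SKS. -/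
def KS : Set Rule := {.aiDown, .awDown, .acDown, .s, .m}

/-- A proof of `Q` in the system `Rs` is a derivation from the unit `t` to `Q`. -/
def Proof (Rs : Set Rule) (Q : F) : Prop := Deriv (Step Rs) .tt Q

/-- A rule `r` is derivable from a set `Rs` of rules if every instance of `r`
(with premise `P` and conclusion `Q`) can be replaced by a derivation from
`P` to `Q` using only rules of `Rs`. -/
def RuleDerivable (r : Rule) (Rs : Set Rule) : Prop :=
  ∀ P Q : F, Step {r} P Q → Deriv (Step Rs) P Q

end DI

namespace DI

/-- A step stays a step inside any context, because the contexts of steps are closed under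
adding outer layers. -/
theorem Step.fill {Rs : Set Rule} {P Q : F} (h : Step Rs P Q) (D : Ctx) :
    Step Rs (D.fill P) (D.fill Q) := by
  induction D with
  | hole => exact h
  | disL D R ih =>
    obtain ⟨r, hr, C, P', Q', hs, h₁, h₂⟩ := ih
    exact ⟨r, hr, .disL C R, P', Q', hs, .disCongr h₁ (.refl R), .disCongr h₂ (.refl R)⟩
  | disR R D ih =>
    obtain ⟨r, hr, C, P', Q', hs, h₁, h₂⟩ := ih
    exact ⟨r, hr, .disR R C, P', Q', hs, .disCongr (.refl R) h₁, .disCongr (.refl R) h₂⟩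
  | conL D R ih =>
    obtain ⟨r, hr, C, P', Q', hs, h₁, h₂⟩ := ih
    exact ⟨r, hr, .conL C R, P', Q', hs, .conCongr h₁ (.refl R), .conCongr h₂ (.refl R)⟩
  | conR R D ih =>
    obtain ⟨r, hr, C, P', Q', hs, h₁, h₂⟩ := ih
    exact ⟨r, hr, .conR R C, P', Q', hs, .conCongr (.refl R) h₁, .conCongr (.refl R) h₂⟩

theorem Equiv.fill {P Q : F} (h : Equiv P Q) (D : Ctx) : Equiv (D.fill P) (D.fill Q) := by
  induction D with
  | hole => exact h
  | disL D R ih => exact .disCongr ih (.refl R)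
  | disR R D ih => exact .disCongr (.refl R) ih
  | conL D R ih => exact .conCongr ih (.refl R)
  | conR R D ih => exact .conCongr (.refl R) ih

theorem Deriv.fill {Rs : Set Rule} {P Q : F} (h : Deriv (Step Rs) P Q) (D : Ctx) :
    Deriv (Step Rs) (D.fill P) (D.fill Q) := by
  induction h with
  | eqv h => exact .eqv (h.fill D)
  | step hs _ ih => exact .step (hs.fill D) ih

theorem Step.of_equiv {Rs : Set Rule} {P Q R : F} (h : Equiv P Q) (hs : Step Rs Q R) :
    Step Rs P R := by
  obtain ⟨r, hr, C, P', Q', hs, h₁, h₂⟩ := hs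
  exact ⟨r, hr, C, P', Q', hs, h.trans h₁, h₂⟩

theorem Deriv.trans {Rs : Set Rule} {P Q R : F} (h₁ : Deriv (Step Rs) P Q)
    (h₂ : Deriv (Step Rs) Q R) : Deriv (Step Rs) P R := by
  induction h₁ with
  | eqv h =>
    cases h₂ with
    | eqv h' => exact .eqv (h.trans h')
    | step hs hd => exact .step (hs.of_equiv h) hd
  | step hs _ ih => exact .step hs (ih h₂)

theorem Deriv.switch (P Q R : F) :
    Deriv (Step {Rule.s}) (.con P (.dis Q R)) (.dis (.con P Q) R) :=
  .step ⟨.s, rfl, .hole, _, _, .s P Q R, .refl _, .refl _⟩ (.eqv (.refl _))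

/-- Proposition: context insertion for SKS.
For all formulas `P`, `Q` and every context `C{ }`, there is a derivation
using only the switch rule `s` with premise `C[P,Q]` and conclusion
`[C{P}, Q]`. -/
theorem ctx_insertion (P Q : F) (C : Ctx) :
    Deriv (Step {Rule.s}) (C.fill (.dis P Q)) (.dis (C.fill P) Q) := by
  induction C with
  | hole => exact .eqv (.refl _)
  | disL C R ih =>
    refine (ih.fill (.disL .hole R)).trans (.eqv ?_)
    -- `[[C{P}, Q], R] = [[C{P}, R], Q]`
    exact (Equiv.disAssoc _ _ _).trans
      ((Equiv.disCongr (.refl _) (.disComm _ _)).trans (Equiv.disAssoc _ _ _).symm)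
  | disR R C ih =>
    exact (ih.fill (.disR R .hole)).trans (.eqv (Equiv.disAssoc _ _ _).symm)
  | conL C R ih =>
    -- The switch rule distributes from the left, so `R` is commuted to the front and back.
    exact (ih.fill (.conL .hole R)).trans <| (Deriv.eqv (.conComm _ _)).trans <|
      (Deriv.switch R (C.fill P) Q).trans (.eqv (.disCongr (.conComm _ _) (.refl _)))
  | conR R C ih =>
    exact (ih.fill (.conR R .hole)).trans (.switch R (C.fill P) Q)

end DI
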